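/- arXiv:2510.26771 — 2 statements merged into one kernel-verified Lean document; each statement's English description precedes it below -/
import Mathlib

section
/- (Theorem 1, deterministic form.) Let X ∈ ℝ^{s×d}, let L ∈ ℝ^{s×s} be orthogonal, and let b_1,…,b_s ≥ 1 be natural numbers. Set Y := L * X and for each row i let y_i denote the i-th row of Y. Define Ŷ row-wise by min-max quantization: if range(y_i) > 0 then Ŷ_{ij} := round(y_{ij}/s_i)·s_i with s_i := range(y_i)/(2^{b_i} − 1), and Ŷ_i := y_i if range(y_i) = 0. Then the squared Frobenius norm satisfies ‖L⁻¹ * Ŷ − X‖² ≤ (d/2) · ∑_{i=1}^s ‖y_i‖² / (2^{b_i} − 1)². -/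
/-- The range of a vector: `max_j y_j − min_j y_j`. -/
noncomputable def vrange {d : ℕ} (y : Fin d → ℝ) : ℝ := (⨆ j, y j) - (⨅ j, y j)

/-- Min-max scale of a row `y` at bit width `b`. -/
noncomputable def mmScale {d : ℕ} (y : Fin d → ℝ) (b : ℕ) : ℝ :=
  vrange y / ((2 : ℝ) ^ b - 1)

/-- Min-max quantize–dequantize of a row `y` at bit width `b`: each coordinate is
reconstructed as `round(y_j / s)·s` when `range(y) > 0`, and left unchanged otherwise. -/
noncomputable def mmDequant {d : ℕ} (y : Fin d → ℝ) (b : ℕ) : Fin d → ℝ :=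
  fun j =>
    if 0 < vrange y then (round (y j / mmScale y b) : ℝ) * mmScale y b else y j

theorem vrange_sq_le {d : ℕ} (y : Fin d → ℝ) (h : 0 < vrange y) :
    (vrange y) ^ 2 ≤ 2 * ∑ j, (y j) ^ 2 := by
  rcases isEmpty_or_nonempty (Fin d) with he | hne
  · simp [vrange] at h
  obtain ⟨p, hp⟩ := exists_eq_ciSup_of_finite (f := y)
  obtain ⟨q, hq⟩ := exists_eq_ciInf_of_finite (f := y)
  have hr : vrange y = y p - y q := by rw [vrange, hp, hq]
  have hpq : p ≠ q := by
    rintro rfl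
    rw [hr] at h
    simp at h
  have h1 : ∑ j ∈ ({p, q} : Finset (Fin d)), (y j) ^ 2 ≤ ∑ j, (y j) ^ 2 :=
    Finset.sum_le_sum_of_subset_of_nonneg (Finset.subset_univ _) (fun _ _ _ => sq_nonneg _)
  rw [Finset.sum_pair hpq] at h1
  rw [hr]
  nlinarith [sq_nonneg (y p + y q)]

theorem mmDequant_row {d : ℕ} (y : Fin d → ℝ) (b : ℕ) (hb : 1 ≤ b) :
    ∑ j, (mmDequant y b j - y j) ^ 2 ≤
      ((d : ℝ) / 2) * ((∑ j, (y j) ^ 2) / ((2 : ℝ) ^ b - 1) ^ 2) := by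
  by_cases h : 0 < vrange y
  · have h2 : (0 : ℝ) < (2 : ℝ) ^ b - 1 := by
      have : (1 : ℝ) < 2 ^ b := one_lt_pow₀ (by norm_num) (by omega)
      linarith
    have hs : 0 < mmScale y b := div_pos h h2
    have hj : ∀ j ∈ Finset.univ, (mmDequant y b j - y j) ^ 2 ≤ (mmScale y b) ^ 2 / 4 := by
      intro j _
      have h3 := abs_le.mp (abs_sub_round (y j / mmScale y b))
      have h5 : mmDequant y b j - y j
          = -((y j / mmScale y b - round (y j / mmScale y b)) * mmScale y b) := by
        simp only [mmDequant, if_pos h]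
        field_simp
        ring
      have h4 : (y j / mmScale y b - round (y j / mmScale y b)) ^ 2 ≤ 1 / 4 := by
        nlinarith [h3.1, h3.2]
      rw [h5, neg_sq, mul_pow]
      nlinarith [sq_nonneg (mmScale y b)]
    have h6 := Finset.sum_le_sum hj
    simp only [Finset.sum_const, Finset.card_univ, Fintype.card_fin, nsmul_eq_mul] at h6
    refine h6.trans ?_
    have h7 : (mmScale y b) ^ 2 ≤ 2 * ((∑ j, (y j) ^ 2) / ((2 : ℝ) ^ b - 1) ^ 2) := by
      rw [mmScale, div_pow, ← mul_div_assoc]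
      exact div_le_div_of_nonneg_right (vrange_sq_le y h) (sq_nonneg _)
    have hd : (0 : ℝ) ≤ d := Nat.cast_nonneg d
    nlinarith [mul_le_mul_of_nonneg_left h7 hd]
  · simp only [mmDequant, if_neg h, sub_self]
    simp only [ne_eq, OfNat.ofNat_ne_zero, not_false_eq_true, zero_pow, Finset.sum_const_zero]
    positivity

theorem frob_trace {s d : ℕ} (A : Matrix (Fin s) (Fin d) ℝ) :
    ∑ i, ∑ j, (A i j) ^ 2 = (A.transpose * A).trace := by
  simp only [Matrix.trace, Matrix.diag, Matrix.mul_apply, Matrix.transpose_apply]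
  rw [Finset.sum_comm]
  simp only [sq]

/-- **Theorem 1, deterministic form.** For orthogonal `L` and row-wise
min-max quantization of `Y = L X` at bit widths `b i ≥ 1`,
`‖L⁻¹ Ŷ − X‖² ≤ (d/2) · ∑ i ‖y_i‖² / (2^{b_i} − 1)²`. -/
theorem stamp_ubound_deterministic
    (s d : ℕ) (X : Matrix (Fin s) (Fin d) ℝ)
    (L : Matrix (Fin s) (Fin s) ℝ) (hL : L.transpose * L = 1)
    (b : Fin s → ℕ) (hb : ∀ i, 1 ≤ b i) :
    (∑ i, ∑ j,
        ((L⁻¹ * (Matrix.of fun i => mmDequant ((L * X) i) (b i)) - X) i j) ^ 2) ≤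
      ((d : ℝ) / 2) *
        ∑ i, (∑ j, ((L * X) i j) ^ 2) / ((2 : ℝ) ^ (b i) - 1) ^ 2 := by
  have hL' : L * L.transpose = 1 := mul_eq_one_comm.mp hL
  have hinv : L⁻¹ = L.transpose := Matrix.inv_eq_left_inv hL
  set Y : Matrix (Fin s) (Fin d) ℝ := Matrix.of fun i => mmDequant ((L * X) i) (b i) with hY
  have hE : L⁻¹ * Y - X = L.transpose * (Y - L * X) := by
    rw [hinv, Matrix.mul_sub, ← Matrix.mul_assoc, hL, Matrix.one_mul]
  have hF : ∑ i, ∑ j, ((L⁻¹ * Y - X) i j) ^ 2 = ∑ i, ∑ j, ((Y - L * X) i j) ^ 2 := by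
    rw [hE, frob_trace, frob_trace, Matrix.transpose_mul, Matrix.transpose_transpose,
      Matrix.mul_assoc, ← Matrix.mul_assoc L, hL', Matrix.one_mul]
  rw [hF, Finset.mul_sum]
  exact Finset.sum_le_sum fun i _ => mmDequant_row ((L * X) i) (b i) (hb i)
end

section
/- (Theorem 1, expectation form.) Let (Ω, μ) be a probability space and X : Ω → ℝ^{s×d} a measurable random matrix with E‖X‖² < ∞. Let L ∈ ℝ^{s×s} be orthogonal and b_1,…,b_s ≥ 1 natural numbers. For each outcome ω set Y(ω) := L * X(ω) and define Ŷ(ω) row-wise by min-max quantization: if range(y_i(ω)) > 0 then Ŷ_{ij}(ω) := round(y_{ij}(ω)/s_i(ω))·s_i(ω) with s_i(ω) := range(y_i(ω))/(2^{b_i} − 1), and Ŷ_i(ω) := y_i(ω) otherwise. Then E[‖L⁻¹ * Ŷ − X‖²] ≤ (d/2) · ∑_{i=1}^s E[‖y_i‖²] / (2^{b_i} − 1)², where ‖·‖ is the Frobenius norm and ‖y_i‖ the Euclidean norm of the i-th row of L X. -/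
open MeasureTheory

theorem frob_aux {s d : ℕ} (A : Matrix (Fin s) (Fin s) ℝ) (hA : A.transpose * A = 1)
    (M : Matrix (Fin s) (Fin d) ℝ) :
    ∑ i, ∑ j, ((A * M) i j) ^ 2 = ∑ i, ∑ j, (M i j) ^ 2 := by
  have key : ∀ N : Matrix (Fin s) (Fin d) ℝ,
      ∑ i, ∑ j, (N i j) ^ 2 = (N.transpose * N).trace := by
    intro N
    rw [Finset.sum_comm]
    simp [Matrix.trace, Matrix.mul_apply, pow_two]
  rw [key, key, Matrix.transpose_mul, Matrix.mul_assoc, ← Matrix.mul_assoc A.transpose, hA,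
    Matrix.one_mul]

theorem vrange_sq_aux {d : ℕ} (y : Fin d → ℝ) (h : 0 < vrange y) :
    vrange y ^ 2 ≤ 2 * ∑ j, y j ^ 2 := by
  rcases isEmpty_or_nonempty (Fin d) with he | hne
  · simp [vrange, Real.iSup_of_isEmpty, Real.iInf_of_isEmpty] at h
  obtain ⟨p, hp⟩ := exists_eq_ciSup_of_finite (f := y)
  obtain ⟨q, hq⟩ := exists_eq_ciInf_of_finite (f := y)
  have hv : vrange y = y p - y q := by rw [vrange, hp, hq]
  have hpq : p ≠ q := by
    rintro rfl
    simp [hv] at h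
  have h2 : y p ^ 2 + y q ^ 2 ≤ ∑ j, y j ^ 2 := by
    rw [← Finset.sum_pair (f := fun j => y j ^ 2) hpq]
    exact Finset.sum_le_sum_of_subset_of_nonneg (Finset.subset_univ _)
      (fun _ _ _ => sq_nonneg _)
  rw [hv]
  nlinarith [sq_nonneg (y p + y q)]

theorem row_aux {d : ℕ} (y : Fin d → ℝ) (b : ℕ) (hb : 1 ≤ b) :
    ∑ j, (mmDequant y b j - y j) ^ 2 ≤
      ((d : ℝ) / 2) * ((∑ j, y j ^ 2) / ((2 : ℝ) ^ b - 1) ^ 2) := by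
  have hpos : 0 < (2 : ℝ) ^ b - 1 := by
    have := one_lt_pow₀ (one_lt_two : (1 : ℝ) < 2) (by omega : b ≠ 0)
    linarith
  by_cases h : 0 < vrange y
  · have hs : 0 < mmScale y b := div_pos h hpos
    have hj : ∀ j, (mmDequant y b j - y j) ^ 2 ≤
        (1 / 2) * ((∑ j, y j ^ 2) / ((2 : ℝ) ^ b - 1) ^ 2) := by
      intro j
      have e : mmDequant y b j - y j
          = -((y j / mmScale y b - round (y j / mmScale y b)) * mmScale y b) := by
        simp only [mmDequant, h, if_true]
        field_simp
        ring
      have hr := abs_sub_round (y j / mmScale y b)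
      have hr2 : (y j / mmScale y b - round (y j / mmScale y b)) ^ 2 ≤ 1 / 4 := by
        rw [← sq_abs]
        nlinarith [abs_nonneg (y j / mmScale y b - round (y j / mmScale y b))]
      rw [e, neg_sq, mul_pow]
      calc _ ≤ 1 / 4 * mmScale y b ^ 2 := by gcongr
        _ = 1 / 4 * (vrange y ^ 2 / ((2 : ℝ) ^ b - 1) ^ 2) := by rw [mmScale, div_pow]
        _ ≤ 1 / 4 * ((2 * ∑ j, y j ^ 2) / ((2 : ℝ) ^ b - 1) ^ 2) := by
          gcongr
          exact vrange_sq_aux y h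
        _ = _ := by ring
    refine (Finset.sum_le_sum fun j _ => hj j).trans (le_of_eq ?_)
    simp
    ring
  · simp only [mmDequant, h, if_false, sub_self]
    simp only [ne_eq, OfNat.ofNat_ne_zero, not_false_eq_true, zero_pow, Finset.sum_const_zero]
    have : 0 ≤ ∑ j, y j ^ 2 := Finset.sum_nonneg fun _ _ => sq_nonneg _
    positivity

/-- **Theorem 1, expectation form.** For a random activation matrix `X`
with finite second moment, an orthogonal `L`, and row-wise min-max quantization of
`Y = L X` at bit widths `b i ≥ 1`,
`E[‖L⁻¹ Ŷ − X‖²] ≤ (d/2) · ∑ i E[‖y_i‖²] / (2^{b_i} − 1)²`. -/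
theorem stamp_ubound_expectation
    {Ω : Type*} [MeasurableSpace Ω] (μ : Measure Ω) [IsProbabilityMeasure μ]
    (s d : ℕ) (X : Ω → Matrix (Fin s) (Fin d) ℝ) (hX : Measurable fun ω i j => X ω i j)
    (hX2 : Integrable (fun ω => ∑ i, ∑ j, (X ω i j) ^ 2) μ)
    (L : Matrix (Fin s) (Fin s) ℝ) (hL : L.transpose * L = 1)
    (b : Fin s → ℕ) (hb : ∀ i, 1 ≤ b i) :
    (∫ ω, ∑ i, ∑ j,
        ((L⁻¹ * (Matrix.of fun i => mmDequant ((L * X ω) i) (b i)) - X ω) i j) ^ 2 ∂μ) ≤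
      ((d : ℝ) / 2) *
        ∑ i, (∫ ω, ∑ j, ((L * X ω) i j) ^ 2 ∂μ) / ((2 : ℝ) ^ (b i) - 1) ^ 2 := by
  have hL' : L * L.transpose = 1 := mul_eq_one_comm.mp hL
  have hinv : L⁻¹ = L.transpose := Matrix.inv_eq_left_inv hL
  have hmeas : ∀ i j, Measurable fun ω => X ω i j := fun i j =>
    (measurable_pi_apply j).comp ((measurable_pi_apply i).comp hX)
  have hint : ∀ i, Integrable (fun ω => ∑ j, ((L * X ω) i j) ^ 2) μ := by
    intro i
    refine hX2.mono' ?_ (Filter.Eventually.of_forall fun ω => ?_)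
    · refine Measurable.aestronglyMeasurable ?_
      simp only [Matrix.mul_apply]
      refine Finset.measurable_sum _ fun j _ => Measurable.pow_const ?_ 2
      exact Finset.measurable_sum _ fun k _ => (hmeas k j).const_mul _
    · rw [Real.norm_of_nonneg (Finset.sum_nonneg fun _ _ => sq_nonneg _),
        ← frob_aux L hL (X ω)]
      exact Finset.single_le_sum (f := fun i => ∑ j, ((L * X ω) i j) ^ 2)
        (fun _ _ => Finset.sum_nonneg fun _ _ => sq_nonneg _) (Finset.mem_univ i)
  have hg : ((d : ℝ) / 2) *
        ∑ i, (∫ ω, ∑ j, ((L * X ω) i j) ^ 2 ∂μ) / ((2 : ℝ) ^ (b i) - 1) ^ 2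
      = ∫ ω, ((d : ℝ) / 2) *
        ∑ i, (∑ j, ((L * X ω) i j) ^ 2) / ((2 : ℝ) ^ (b i) - 1) ^ 2 ∂μ := by
    rw [integral_const_mul, integral_finsetSum _ fun i _ => (hint i).div_const _]
    simp only [integral_div]
  rw [hg]
  refine integral_mono_of_nonneg
    (Filter.Eventually.of_forall fun ω =>
      Finset.sum_nonneg fun _ _ => Finset.sum_nonneg fun _ _ => sq_nonneg _)
    ((integrable_finsetSum _ fun i _ => (hint i).div_const _).const_mul _)
    (Filter.Eventually.of_forall fun ω => ?_)
  have e : L⁻¹ * (Matrix.of fun i => mmDequant ((L * X ω) i) (b i)) - X ω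
      = L.transpose * ((Matrix.of fun i => mmDequant ((L * X ω) i) (b i)) - L * X ω) := by
    rw [hinv, Matrix.mul_sub, ← Matrix.mul_assoc L.transpose L, hL, Matrix.one_mul]
  simp only [e]
  rw [frob_aux L.transpose (by rw [Matrix.transpose_transpose]; exact hL'), Finset.mul_sum]
  exact Finset.sum_le_sum fun i _ => row_aux ((L * X ω) i) (b i) (hb i)
end
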